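/- arXiv:1603.01115 — 2 statements merged into one kernel-verified Lean document; each statement's English description precedes it below -/
import Mathlib

section
/- Fix integers M ≥ 1, N ≥ 1 and reals γ_i > 0 (i = 1,…,M), θ_j > 0 (j = 1,…,N), a > 0, E_max > 0; set A₁ = Σ_i γ_i, A₂ = Σ_j θ_j, assume N·A₁ > a·A₂, and let x₁* > 1 be the unique solution of x·ln x − x + 1 = A₁ − (a/N)·A₂. Assume a·(x₁* − 1)/(A₁ + x₁* − 1) ≤ E_max ≤ N·(x₁* − 1)/A₂, and let D = N·(x₁* − 1 + A₁) − a·A₂ (which is > 0). Then the allocation τ₀* = (N·(x₁* − 1) − E_max·A₂)/D, τ_{1,i}* = γ_i·(N·(x₁* − 1) − E_max·A₂)/((x₁* − 1)·D), τ_{2,j}* = θ_j·(E_max·(x₁* − 1 + A₁) − a·(x₁* − 1))/((x₁* − 1)·D), and Ē* = (E_max·(x₁* − 1 + A₁) − a·(x₁* − 1))/D is feasible and maximizes Σ_{i=1}^M τ_{1,i}·log₂(1 + γ_i·τ₀/τ_{1,i}) + Σ_{j=1}^N τ_{2,j}·log₂(1 + θ_j·Ē/τ_{2,j}) over all (τ₀,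 τ_{1,1},…,τ_{1,M}, τ_{2,1},…,τ_{2,N}, Ē) ≥ 0 with τ₀ + Σ_i τ_{1,i} + Σ_j τ_{2,j} ≤ 1 and a·τ₀ + N·Ē ≤ E_max. -/
theorem aux_tangent (x τ c : ℝ) (hx : 1 < x) (hτ : 0 ≤ τ) (hc : 0 ≤ c) :
    τ * Real.log (1 + c / τ) ≤ τ * (Real.log x - 1 + 1 / x) + c / x := by
  have hx0 : 0 < x := by linarith
  rcases hτ.eq_or_lt with h | h
  · subst h
    simp
    positivity
  · have hu : 0 < 1 + c / τ := by positivity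
    have h1 := Real.log_le_sub_one_of_pos (div_pos hu hx0)
    rw [Real.log_div hu.ne' hx0.ne'] at h1
    have h2 : Real.log (1 + c / τ) ≤ Real.log x - 1 + (1 + c / τ) / x := by linarith
    calc τ * Real.log (1 + c / τ) ≤ τ * (Real.log x - 1 + (1 + c / τ) / x) :=
          mul_le_mul_of_nonneg_left h2 h.le
      _ = _ := by field_simp; ring

theorem aux_value (x g t : ℝ) (hx : 1 < x) (hg : 0 < g) :
    g * t / (x - 1) * Real.log (1 + g * t / (g * t / (x - 1))) =
      g * t / (x - 1) * Real.log x := by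
  have hx0 : x - 1 ≠ 0 := by linarith
  by_cases h : t = 0
  · simp [h]
  · have : 1 + g * t / (g * t / (x - 1)) = x := by
      field_simp
      ring
    rw [this]

/-- Middle regime of Theorem 3 of the paper (equations (16)–(19), both node
types active): with `A₁ = Σᵢ γᵢ`, `A₂ = Σⱼ θⱼ`, `N A₁ > a A₂`, `x₁* > 1` the
unique solution of `x ln x - x + 1 = A₁ - (a/N) A₂`, and
`a (x₁*-1)/(A₁+x₁*-1) ≤ E_max ≤ N (x₁*-1)/A₂`, the denominator
`D = N (x₁*-1+A₁) - a A₂` is positive and the displayed allocation is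
feasible and maximizes the sum throughput of problem P4.  (In Lean,
`τ * Real.logb 2 (1 + c / τ)` equals `0` at `τ = 0`.) -/
theorem P4_opt_middle_regime (M N : ℕ) (hM : 1 ≤ M) (hN : 1 ≤ N)
    (γ : Fin M → ℝ) (θ : Fin N → ℝ) (a Emax : ℝ)
    (hγ : ∀ i, 0 < γ i) (hθ : ∀ j, 0 < θ j) (ha : 0 < a) (hEmax : 0 < Emax)
    (A₁ A₂ x₁ D : ℝ) (hA₁ : A₁ = ∑ i, γ i) (hA₂ : A₂ = ∑ j, θ j)
    (hNA : (N : ℝ) * A₁ > a * A₂) (hx₁ : 1 < x₁)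
    (hxeq : x₁ * Real.log x₁ - x₁ + 1 = A₁ - (a / (N : ℝ)) * A₂)
    (hEmax_lo : a * (x₁ - 1) / (A₁ + x₁ - 1) ≤ Emax)
    (hEmax_hi : Emax ≤ (N : ℝ) * (x₁ - 1) / A₂)
    (hD : D = (N : ℝ) * (x₁ - 1 + A₁) - a * A₂)
    (τ0s Es : ℝ) (τ1s : Fin M → ℝ) (τ2s : Fin N → ℝ)
    (hτ0s : τ0s = ((N : ℝ) * (x₁ - 1) - Emax * A₂) / D)
    (hτ1s : ∀ i, τ1s i =
      γ i * ((N : ℝ) * (x₁ - 1) - Emax * A₂) / ((x₁ - 1) * D))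
    (hτ2s : ∀ j, τ2s j =
      θ j * (Emax * (x₁ - 1 + A₁) - a * (x₁ - 1)) / ((x₁ - 1) * D))
    (hEs : Es = (Emax * (x₁ - 1 + A₁) - a * (x₁ - 1)) / D) :
    0 < D ∧
    (0 ≤ τ0s ∧ (∀ i, 0 ≤ τ1s i) ∧ (∀ j, 0 ≤ τ2s j) ∧ 0 ≤ Es ∧
      τ0s + (∑ i, τ1s i) + (∑ j, τ2s j) ≤ 1 ∧
      a * τ0s + (N : ℝ) * Es ≤ Emax) ∧
    ∀ (τ0 : ℝ) (τ1 : Fin M → ℝ) (τ2 : Fin N → ℝ) (Ebar : ℝ),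
      0 ≤ τ0 → (∀ i, 0 ≤ τ1 i) → (∀ j, 0 ≤ τ2 j) → 0 ≤ Ebar →
      τ0 + (∑ i, τ1 i) + (∑ j, τ2 j) ≤ 1 →
      a * τ0 + (N : ℝ) * Ebar ≤ Emax →
      (∑ i, τ1 i * Real.logb 2 (1 + γ i * τ0 / τ1 i)) +
          (∑ j, τ2 j * Real.logb 2 (1 + θ j * Ebar / τ2 j)) ≤
        (∑ i, τ1s i * Real.logb 2 (1 + γ i * τ0s / τ1s i)) +
          ∑ j, τ2s j * Real.logb 2 (1 + θ j * Es / τ2s j) := by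
  have hNpos : (0 : ℝ) < N := by exact_mod_cast hN
  have hy : 0 < x₁ - 1 := by linarith
  have hx0 : 0 < x₁ := by linarith
  have hDpos : 0 < D := by
    have := mul_pos hNpos hy
    rw [hD]; linarith
  have hA₁pos : 0 < A₁ := by
    rw [hA₁]
    exact Finset.sum_pos (fun i _ => hγ i) ⟨⟨0, hM⟩, Finset.mem_univ _⟩
  have hA₂pos : 0 < A₂ := by
    rw [hA₂]
    exact Finset.sum_pos (fun i _ => hθ i) ⟨⟨0, hN⟩, Finset.mem_univ _⟩
  rw [div_le_iff₀ (by linarith)] at hEmax_lo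
  rw [le_div_iff₀ hA₂pos] at hEmax_hi
  have h0 : 0 ≤ τ0s := by
    rw [hτ0s]; exact div_nonneg (by linarith) hDpos.le
  have hE0 : 0 ≤ Es := by
    rw [hEs]; exact div_nonneg (by linarith) hDpos.le
  have h1 : ∀ i, τ1s i = γ i * τ0s / (x₁ - 1) := by
    intro i; rw [hτ1s, hτ0s]; field_simp
  have h2 : ∀ j, τ2s j = θ j * Es / (x₁ - 1) := by
    intro j; rw [hτ2s, hEs]; field_simp
  have hs1 : ∑ i, τ1s i = A₁ * τ0s / (x₁ - 1) := by
    simp only [h1]; rw [← Finset.sum_div, ← Finset.sum_mul, hA₁]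
  have hs2 : ∑ j, τ2s j = A₂ * Es / (x₁ - 1) := by
    simp only [h2]; rw [← Finset.sum_div, ← Finset.sum_mul, hA₂]
  have e0 : τ0s * D = (N : ℝ) * (x₁ - 1) - Emax * A₂ := by
    rw [hτ0s]; field_simp
  have eE : Es * D = Emax * (x₁ - 1 + A₁) - a * (x₁ - 1) := by
    rw [hEs]; field_simp
  have hen : a * τ0s + (N : ℝ) * Es = Emax := by
    apply mul_right_cancel₀ hDpos.ne'
    calc _ = a * (τ0s * D) + N * (Es * D) := by ring
      _ = _ := by rw [e0, eE, hD]; ring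
  have htm' : τ0s * (x₁ - 1) + A₁ * τ0s + A₂ * Es = x₁ - 1 := by
    apply mul_right_cancel₀ hDpos.ne'
    calc _ = (x₁ - 1 + A₁) * (τ0s * D) + A₂ * (Es * D) := by ring
      _ = _ := by rw [e0, eE, hD]; ring
  have htm : τ0s + (∑ i, τ1s i) + (∑ j, τ2s j) = 1 := by
    rw [hs1, hs2]; field_simp; linarith
  refine ⟨hDpos, ⟨h0, ?_, ?_, hE0, htm.le, hen.le⟩, ?_⟩
  · intro i; rw [h1]; have := hγ i; positivity
  · intro j; rw [h2]; have := hθ j; positivity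
  intro τ0 τ1 τ2 Eb p0 p1 p2 pE ht he
  obtain ⟨L, hL⟩ : ∃ L, L = Real.log x₁ - 1 + 1 / x₁ := ⟨_, rfl⟩
  have hLx : A₁ = x₁ * L + (a / N) * A₂ := by
    have : x₁ * L = x₁ * Real.log x₁ - x₁ + 1 := by rw [hL]; field_simp
    linarith
  have hLpos : 0 ≤ L := by
    have : 0 < x₁ * L := by
      have h3 : A₁ - a / N * A₂ = (N * A₁ - a * A₂) / N := by field_simp
      have : 0 < (N * A₁ - a * A₂) / N := div_pos (by linarith) hNpos
      linarith
    exact (pos_of_mul_pos_right this hx0.le).le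
  have key : ∀ t S E : ℝ, S * L + (A₁ * t + A₂ * E) / x₁ =
      L * (t + S) + A₂ / (N * x₁) * (a * t + N * E) := by
    intro t S E
    rw [hLx]; field_simp; ring
  have up : (∑ i, τ1 i * Real.log (1 + γ i * τ0 / τ1 i)) +
          (∑ j, τ2 j * Real.log (1 + θ j * Eb / τ2 j)) ≤ L + A₂ / (N * x₁) * Emax := by
    have u1 : (∑ i, τ1 i * Real.log (1 + γ i * τ0 / τ1 i)) ≤
        (∑ i, τ1 i) * L + A₁ * τ0 / x₁ := by
      rw [hA₁, Finset.sum_mul, Finset.sum_mul, Finset.sum_div, ← Finset.sum_add_distrib, hL]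
      exact Finset.sum_le_sum fun i _ =>
        aux_tangent _ _ _ hx₁ (p1 i) (mul_nonneg (hγ i).le p0)
    have u2 : (∑ j, τ2 j * Real.log (1 + θ j * Eb / τ2 j)) ≤
        (∑ j, τ2 j) * L + A₂ * Eb / x₁ := by
      rw [hA₂, Finset.sum_mul, Finset.sum_mul, Finset.sum_div, ← Finset.sum_add_distrib, hL]
      exact Finset.sum_le_sum fun i _ =>
        aux_tangent _ _ _ hx₁ (p2 i) (mul_nonneg (hθ i).le pE)
    have k := key τ0 (∑ i, τ1 i + ∑ j, τ2 j) Eb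
    have k1 : L * (τ0 + (∑ i, τ1 i + ∑ j, τ2 j)) ≤ L * 1 :=
      mul_le_mul_of_nonneg_left (by linarith) hLpos
    have k2 : A₂ / (N * x₁) * (a * τ0 + N * Eb) ≤ A₂ / (N * x₁) * Emax :=
      mul_le_mul_of_nonneg_left he (by positivity)
    rw [add_div, add_mul] at k
    linarith
  have opt : (∑ i, τ1s i * Real.log (1 + γ i * τ0s / τ1s i)) +
          (∑ j, τ2s j * Real.log (1 + θ j * Es / τ2s j)) = L + A₂ / (N * x₁) * Emax := by
    have v1 : (∑ i, τ1s i * Real.log (1 + γ i * τ0s / τ1s i)) =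
        (∑ i, τ1s i) * Real.log x₁ := by
      rw [Finset.sum_mul]
      refine Finset.sum_congr rfl fun i _ => ?_
      rw [h1]; exact aux_value _ _ _ hx₁ (hγ i)
    have v2 : (∑ j, τ2s j * Real.log (1 + θ j * Es / τ2s j)) =
        (∑ j, τ2s j) * Real.log x₁ := by
      rw [Finset.sum_mul]
      refine Finset.sum_congr rfl fun i _ => ?_
      rw [h2]; exact aux_value _ _ _ hx₁ (hθ i)
    have k := key τ0s (∑ i, τ1s i + ∑ j, τ2s j) Es
    rw [hen, ← add_assoc, htm, mul_one] at k
    rw [← k, v1, v2, hs1, hs2, hL]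
    field_simp
    ring
  have l2 : 0 < Real.log 2 := Real.log_pos (by norm_num)
  simp only [Real.logb, ← mul_div_assoc]
  rw [← Finset.sum_div, ← Finset.sum_div, ← Finset.sum_div, ← Finset.sum_div, ← add_div, ← add_div]
  exact div_le_div_of_nonneg_right (up.trans opt.ge) l2.le
end

section
/- Fix integers M ≥ 1, N ≥ 1 and reals γ_i > 0 (i = 1,…,M), θ_j > 0 (j = 1,…,N), a > 0, E_max > 0; set A₁ = Σ_i γ_i, A₂ = Σ_j θ_j, assume N·A₁ > a·A₂, let x₁* > 1 be the unique solution of x·ln x − x + 1 = A₁ − (a/N)·A₂, and let x* > 1 be the unique solution of x·ln x − x + 1 = A₁. Assume E_max ≤ a·(x₁* − 1)/(A₁ + x₁* − 1). Then the allocation τ₀* = min( (x* − 1)/(A₁ + x* − 1), E_max/a ), τ_{1,i}* = max( γ_i/(A₁ + x* − 1), (γ_i/A₁)·(1 − E_max/a) ) for all i, τ_{2,j}* = 0 for all j, and Ē* = 0 is feasible and maximizes Σ_{i=1}^M τ_{1,i}·log₂(1 + γ_i·τ₀/τ_{1,i}) + Σ_{j=1}^N τ_{2,j}·log₂(1 +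 θ_j·Ē/τ_{2,j}) over all (τ₀, τ_{1,1},…,τ_{1,M}, τ_{2,1},…,τ_{2,N}, Ē) ≥ 0 with τ₀ + Σ_i τ_{1,i} + Σ_j τ_{2,j} ≤ 1 and a·τ₀ + N·Ē ≤ E_max. -/
theorem aux_f_mono (z y : ℝ) (hz : 1 ≤ z) (hzy : z ≤ y) :
    z * Real.log z - z + 1 ≤ y * Real.log y - y + 1 := by
  have hz0 : 0 < z := by linarith
  have hy0 : 0 < y := by linarith
  have h1 : Real.log (z / y) ≤ z / y - 1 := Real.log_le_sub_one_of_pos (by positivity)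
  rw [Real.log_div hz0.ne' hy0.ne'] at h1
  have h2 := mul_le_mul_of_nonneg_left h1 hy0.le
  have h3 : y * (z / y - 1) = z - y := by field_simp
  have h4 : 0 ≤ (y - z) * Real.log z := mul_nonneg (by linarith) (Real.log_nonneg hz)
  nlinarith

theorem aux_tangent_s14 (t c z : ℝ) (ht : 0 ≤ t) (hc : 0 ≤ c) (hz : 1 ≤ z) :
    t * Real.logb 2 (1 + c / t) ≤ (t * (Real.log z - 1 + 1 / z) + c * (1 / z)) / Real.log 2 := by
  have hl2 : 0 < Real.log 2 := Real.log_pos (by norm_num)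
  have hz0 : 0 < z := by linarith
  rw [Real.logb, ← mul_div_assoc]
  apply div_le_div_of_nonneg_right _ hl2.le
  rcases ht.eq_or_lt with h | h
  · subst h
    simp only [zero_mul, zero_add]
    positivity
  · have hp : 0 < 1 + c / t := by positivity
    have h1 : Real.log ((1 + c / t) / z) ≤ (1 + c / t) / z - 1 :=
      Real.log_le_sub_one_of_pos (by positivity)
    rw [Real.log_div hp.ne' hz0.ne'] at h1
    have h2 := mul_le_mul_of_nonneg_left h1 ht
    have h3 : t * ((1 + c / t) / z - 1) = t * (1 / z - 1) + c * (1 / z) := by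
      field_simp
      ring
    nlinarith

/-- Small-`E_max` regime of Theorem 3 of the paper (all resources to the
energy-harvesting, Type I, nodes): with `A₁ = Σᵢ γᵢ`, `A₂ = Σⱼ θⱼ`,
`N A₁ > a A₂`, `x₁* > 1` solving `x ln x - x + 1 = A₁ - (a/N) A₂`, `x* > 1`
solving `x ln x - x + 1 = A₁`, and `E_max ≤ a (x₁*-1)/(A₁+x₁*-1)`, the
allocation `τ₀* = min((x*-1)/(A₁+x*-1), E_max/a)`,
`τ_{1,i}* = max(γᵢ/(A₁+x*-1), (γᵢ/A₁)(1 - E_max/a))`, `τ_{2,j}* = 0`,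
`Ē* = 0` is feasible and maximizes the sum throughput of problem P4.
(In Lean, `τ * Real.logb 2 (1 + c / τ)` equals `0` at `τ = 0`.) -/
theorem P4_opt_small_Emax (M N : ℕ) (hM : 1 ≤ M) (hN : 1 ≤ N)
    (γ : Fin M → ℝ) (θ : Fin N → ℝ) (a Emax : ℝ)
    (hγ : ∀ i, 0 < γ i) (hθ : ∀ j, 0 < θ j) (ha : 0 < a) (hEmax : 0 < Emax)
    (A₁ A₂ x₁ x : ℝ) (hA₁ : A₁ = ∑ i, γ i) (hA₂ : A₂ = ∑ j, θ j)
    (hNA : (N : ℝ) * A₁ > a * A₂) (hx₁ : 1 < x₁)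
    (hx₁eq : x₁ * Real.log x₁ - x₁ + 1 = A₁ - (a / (N : ℝ)) * A₂)
    (hx : 1 < x) (hxeq : x * Real.log x - x + 1 = A₁)
    (hEmax_hi : Emax ≤ a * (x₁ - 1) / (A₁ + x₁ - 1))
    (τ0s : ℝ) (τ1s : Fin M → ℝ)
    (hτ0s : τ0s = min ((x - 1) / (A₁ + x - 1)) (Emax / a))
    (hτ1s : ∀ i, τ1s i =
      max (γ i / (A₁ + x - 1)) ((γ i / A₁) * (1 - Emax / a))) :
    (0 ≤ τ0s ∧ (∀ i, 0 ≤ τ1s i) ∧ (∀ j : Fin N, (0:ℝ) ≤ 0) ∧ (0:ℝ) ≤ 0 ∧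
      τ0s + (∑ i, τ1s i) + (∑ _j : Fin N, (0:ℝ)) ≤ 1 ∧
      a * τ0s + (N : ℝ) * 0 ≤ Emax) ∧
    ∀ (τ0 : ℝ) (τ1 : Fin M → ℝ) (τ2 : Fin N → ℝ) (Ebar : ℝ),
      0 ≤ τ0 → (∀ i, 0 ≤ τ1 i) → (∀ j, 0 ≤ τ2 j) → 0 ≤ Ebar →
      τ0 + (∑ i, τ1 i) + (∑ j, τ2 j) ≤ 1 →
      a * τ0 + (N : ℝ) * Ebar ≤ Emax →
      (∑ i, τ1 i * Real.logb 2 (1 + γ i * τ0 / τ1 i)) +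
          (∑ j, τ2 j * Real.logb 2 (1 + θ j * Ebar / τ2 j)) ≤
        (∑ i, τ1s i * Real.logb 2 (1 + γ i * τ0s / τ1s i)) +
          ∑ _j : Fin N, (0:ℝ) *
            Real.logb 2 (1 + θ _j * (0:ℝ) / (0:ℝ)) := by
  have hl2 : 0 < Real.log 2 := Real.log_pos (by norm_num)
  have hNpos : (0 : ℝ) < N := by exact_mod_cast hN
  have hA1p : 0 < A₁ := by
    rw [hA₁]
    exact Finset.sum_pos (fun i _ => hγ i) ⟨⟨0, hM⟩, Finset.mem_univ _⟩
  have hA2p : 0 < A₂ := by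
    rw [hA₂]
    exact Finset.sum_pos (fun i _ => hθ i) ⟨⟨0, hN⟩, Finset.mem_univ _⟩
  have hkp : 0 < a / (N : ℝ) * A₂ := by positivity
  have hxx : x₁ < x := by
    by_contra hcon
    have := aux_f_mono x x₁ hx.le (not_lt.mp hcon)
    linarith
  obtain ⟨e, he⟩ : ∃ e, e = Emax / a := ⟨_, rfl⟩
  have hEe : Emax = a * e := by rw [he]; field_simp
  have he0 : 0 < e := by rw [he]; positivity
  have hd1 : 0 < A₁ + x₁ - 1 := by linarith
  have hd : 0 < A₁ + x - 1 := by linarith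
  have he1 : e * (A₁ + x₁ - 1) ≤ x₁ - 1 := by
    rw [le_div_iff₀ hd1, hEe, mul_assoc] at hEmax_hi
    exact le_of_mul_le_mul_left hEmax_hi ha
  have hel : e < 1 := by
    by_contra hcon
    have := mul_le_mul_of_nonneg_right (not_lt.mp hcon) hd1.le
    linarith
  have hex : e * (A₁ + x - 1) ≤ x - 1 := by
    nlinarith [mul_pos (sub_pos.mpr hxx) (sub_pos.mpr hel)]
  have hτ0 : τ0s = e := by
    rw [hτ0s, ← he]
    exact min_eq_right ((le_div_iff₀ hd).mpr hex)
  have hτ1 : ∀ i, τ1s i = γ i / A₁ * (1 - e) := by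
    intro i
    rw [hτ1s i, ← he]
    apply max_eq_right
    rw [div_le_iff₀ hd]
    have h1 : A₁ ≤ (1 - e) * (A₁ + x - 1) := by linarith
    have h2 := mul_le_mul_of_nonneg_left h1 (div_pos (hγ i) hA1p).le
    have h3 : γ i / A₁ * A₁ = γ i := by field_simp
    linarith
  have h1e : 0 < 1 - e := by linarith
  have hsum : ∑ i, τ1s i = 1 - e := by
    simp_rw [hτ1]
    rw [← Finset.sum_mul, ← Finset.sum_div, ← hA₁, div_self hA1p.ne', one_mul]
  obtain ⟨z, hz⟩ : ∃ z, z = 1 + A₁ * e / (1 - e) := ⟨_, rfl⟩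
  have hz1 : 1 ≤ z := by
    rw [hz]
    have : 0 < A₁ * e / (1 - e) := by positivity
    linarith
  have hz0 : 0 < z := by linarith
  have hzx : z ≤ x₁ := by
    have : A₁ * e / (1 - e) ≤ x₁ - 1 := by
      rw [div_le_iff₀ h1e]
      linarith
    linarith
  have hze : (1 - e) * (z - 1) = A₁ * e := by
    rw [hz]; field_simp; ring
  refine ⟨⟨by rw [hτ0]; exact he0.le, ?_, fun _ => le_rfl, le_rfl, ?_, ?_⟩, ?_⟩
  · intro i
    rw [hτ1]
    exact mul_nonneg (div_pos (hγ i) hA1p).le h1e.le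
  · rw [hτ0, hsum]; simp
  · rw [hτ0, hEe]; simp
  intro τ0 τ1 τ2 Ebar h0 h1 h2 hE hT hEn
  have hval : ∀ i, τ1s i * Real.logb 2 (1 + γ i * τ0s / τ1s i)
      = τ1s i * (Real.log z / Real.log 2) := by
    intro i
    have hg := hγ i
    have : 1 + γ i * τ0s / τ1s i = z := by
      rw [hτ0, hτ1, hz]; field_simp
    rw [this, Real.logb]
  have hR : (∑ i, τ1s i * Real.logb 2 (1 + γ i * τ0s / τ1s i)) +
          ∑ _j : Fin N, (0:ℝ) * Real.logb 2 (1 + θ _j * (0:ℝ) / (0:ℝ))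
      = ((1 - e) * Real.log z) / Real.log 2 := by
    rw [Finset.sum_congr rfl (fun i _ => hval i), ← Finset.sum_mul, hsum]
    simp [mul_div_assoc]
  rw [hR]
  obtain ⟨L, hL⟩ : ∃ L, L = Real.log z - 1 + 1 / z := ⟨_, rfl⟩
  have hS1 : (∑ i, τ1 i * Real.logb 2 (1 + γ i * τ0 / τ1 i)) ≤
      ((∑ i, τ1 i) * L + A₁ * τ0 * (1 / z)) / Real.log 2 := by
    rw [hA₁, hL, Finset.sum_mul, Finset.sum_mul, Finset.sum_mul, ← Finset.sum_add_distrib,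
      Finset.sum_div]
    exact Finset.sum_le_sum fun i _ =>
      aux_tangent_s14 _ _ z (h1 i) (mul_nonneg (hγ i).le h0) hz1
  have hS2 : (∑ j, τ2 j * Real.logb 2 (1 + θ j * Ebar / τ2 j)) ≤
      ((∑ j, τ2 j) * L + A₂ * Ebar * (1 / z)) / Real.log 2 := by
    rw [hA₂, hL, Finset.sum_mul, Finset.sum_mul, Finset.sum_mul, ← Finset.sum_add_distrib,
      Finset.sum_div]
    exact Finset.sum_le_sum fun j _ =>
      aux_tangent_s14 _ _ z (h2 j) (mul_nonneg (hθ j).le hE) hz1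
  refine (add_le_add hS1 hS2).trans ?_
  rw [← add_div]
  apply div_le_div_of_nonneg_right _ hl2.le
  have hzL : z * L = z * Real.log z - z + 1 := by rw [hL]; field_simp
  have hfz := aux_f_mono z x₁ hz1 hzx
  have hf1 := aux_f_mono 1 z le_rfl hz1
  simp only [Real.log_one] at hf1
  have hL0 : 0 ≤ L := by
    by_contra hcon
    nlinarith [mul_pos hz0 (neg_pos.mpr (not_le.mp hcon))]
  have hb1 : ((∑ i, τ1 i) + (∑ j, τ2 j)) * L ≤ (1 - τ0) * L :=
    mul_le_mul_of_nonneg_right (by linarith) hL0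
  obtain ⟨k, hk⟩ : ∃ k, k = a / (N : ℝ) * A₂ := ⟨_, rfl⟩
  have hb2 : A₂ * Ebar ≤ k * (e - τ0) := by
    have : Ebar ≤ a * (e - τ0) / N := by
      rw [le_div_iff₀ hNpos]
      linarith
    have h := mul_le_mul_of_nonneg_left this hA2p.le
    have h' : A₂ * (a * (e - τ0) / N) = k * (e - τ0) := by rw [hk]; ring
    linarith
  have hτe : τ0 ≤ e := by
    have : 0 ≤ (N : ℝ) * Ebar := by positivity
    exact le_of_mul_le_mul_left (by linarith : a * τ0 ≤ a * e) ha
  rw [← hk] at hx₁eq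
  have hco : 0 ≤ (e - τ0) * (A₁ - k - z * L) :=
    mul_nonneg (by linarith) (by linarith)
  have hfin : (1 - τ0) * L + A₁ * τ0 * (1 / z) + A₂ * Ebar * (1 / z) ≤ (1 - e) * Real.log z := by
    apply le_of_mul_le_mul_left _ hz0
    have e1 : z * ((1 - τ0) * L + A₁ * τ0 * (1 / z) + A₂ * Ebar * (1 / z))
        = (1 - τ0) * (z * L) + A₁ * τ0 + A₂ * Ebar := by field_simp
    have e2 : z * ((1 - e) * Real.log z) = (1 - e) * (z * L) + (1 - e) * (z - 1) := by
      rw [hzL]; ring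
    rw [e1, e2, hze]
    linarith
  linarith
end
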